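/- arXiv:2107.00504 — 2 statements merged into one kernel-verified Lean document; each statement's English description precedes it below -/
import Mathlib

section
/- Let δt > 0 and let (u^n), (ũ^n), (λ^n), (f^n) be sequences of functions from S to ℝ satisfying, for every n ≥ 0 and z ∈ S: (ũ^{n+1}(z) − u^n(z))/δt + f^n(z) = 0; (u^{n+1}(z) − ũ^{n+1}(z))/δt = λ^{n+1}(z); λ^{n+1}(z) ≥ 0, u^{n+1}(z) ≥ 0, λ^{n+1}(z)·u^{n+1}(z) = 0. If in addition [f^n, ũ^{n+1}] ≥ 0 for every n ≥ 0, then the scheme is dissipative and unconditionally stable: ‖u^{n+1}‖ ≤ ‖u^n‖ for every n ≥ 0, and in particular ‖u^m‖ ≤ ‖u^0‖ for every m ≥ 1, with no restriction on δt. -/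
open Finset

/-!
An implicit Euler step `(y - x) / τ + g = 0` has `x - y = τ g`, so
`‖x‖² = ‖y‖² + 2τ [g, y] + τ² ‖g‖²`, and the step is dissipative for every `τ > 0` as soon as
`[g, y] ≥ 0`. Both halves of the scheme are such steps: the prediction with `g = f^n`, and the
correction with `g = -λ^{n+1}`, for which complementarity makes `[g, u^{n+1}]` vanish.
-/

lemma apply_self_le_of_apply_sub_nonneg {R M : Type*} [CommRing R] [PartialOrder R]
    [IsOrderedAddMonoid R] [AddCommGroup M] [Module R M] {B : LinearMap.BilinForm R M}
    (hB : B.IsPosSemidef) {x y : M} (h : 0 ≤ B (x - y) y) : B y y ≤ B x x := by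
  have expand : B x x = B y y + (B (x - y) y + B (x - y) y + B (x - y) (x - y)) := by
    simp only [map_sub, LinearMap.sub_apply, hB.isSymm.eq y x]
    ring
  rw [expand]
  exact le_add_of_nonneg_right (add_nonneg (add_nonneg h h) (hB.isNonneg.nonneg _))

lemma apply_self_le_of_implicitEuler_step {K E : Type*} [Field K] [PartialOrder K]
    [IsOrderedRing K] [AddCommGroup E] [Module K E] {B : LinearMap.BilinForm K E}
    (hB : B.IsPosSemidef) {τ : K} (hτ : 0 < τ) {x y g : E}
    (hstep : τ⁻¹ • (y - x) + g = 0) (hg : 0 ≤ B g y) : B y y ≤ B x x := by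
  have hsub : x - y = τ • g := by
    rw [eq_neg_of_add_eq_zero_right hstep, smul_neg, smul_inv_smul₀ hτ.ne', neg_sub]
  apply apply_self_le_of_apply_sub_nonneg hB
  simpa only [hsub, map_smul, LinearMap.smul_apply, smul_eq_mul] using mul_nonneg hτ.le hg

theorem first_order_unconditional_stability_general {E : Type*} [AddCommGroup E] [Module ℝ E]
    {B : LinearMap.BilinForm ℝ E} (hB : B.IsPosSemidef) {δt : ℕ → ℝ} (hδt : ∀ n, 0 < δt n)
    {u ut lam f : ℕ → E}
    (hpredict : ∀ n, (δt n)⁻¹ • (ut (n + 1) - u n) + f n = 0)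
    (hcorrect : ∀ n, (δt n)⁻¹ • (u (n + 1) - ut (n + 1)) = lam (n + 1))
    (hcompl : ∀ n, B (lam (n + 1)) (u (n + 1)) ≤ 0)
    (hpos : ∀ n, 0 ≤ B (f n) (ut (n + 1))) :
    Antitone fun n => Real.sqrt (B (u n) (u n)) := by
  refine antitone_nat_of_succ_le fun n => Real.sqrt_le_sqrt ?_
  calc B (u (n + 1)) (u (n + 1))
      ≤ B (ut (n + 1)) (ut (n + 1)) :=
        apply_self_le_of_implicitEuler_step hB (hδt n) (g := -lam (n + 1))
          (by rw [hcorrect, add_neg_cancel]) (by simpa using hcompl n)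
    _ ≤ B (u n) (u n) := apply_self_le_of_implicitEuler_step hB (hδt n) (hpredict n) (hpos n)

section WeightedForm

variable {S R : Type*} [Fintype S]

/-- The discrete inner product `[x, y] = ∑ z, w z * x z * y z`, as a bilinear form on `S → R`:
the dot product of `w * x` with `y`. -/
def weightedForm [CommSemiring R] (w : S → R) : LinearMap.BilinForm R (S → R) :=
  dotProductBilin R R ∘ₗ LinearMap.mulLeft R w

lemma weightedForm_apply [CommSemiring R] (w x y : S → R) :
    weightedForm w x y = ∑ z, w z * x z * y z :=
  rfl

lemma weightedForm_isPosSemidef [CommRing R] [LinearOrder R] [IsOrderedRing R] {w : S → R}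
    (hw : ∀ z, 0 ≤ w z) : (weightedForm w).IsPosSemidef where
  eq x y := by simp only [weightedForm_apply, mul_right_comm]
  nonneg x := by
    simp only [weightedForm_apply, mul_assoc]
    exact sum_nonneg fun z _ => mul_nonneg (hw z) (mul_self_nonneg (x z))

end WeightedForm

/-- Stability clause of Theorem 3.1: if the discrete operator is nonnegative,
i.e. `[f^n, ũ^{n+1}] ≥ 0` for all `n`, then the first-order positivity-preserving
scheme is dissipative and unconditionally stable:
`‖u^{n+1}‖ ≤ ‖u^n‖` for all `n`, and `‖u^m‖ ≤ ‖u^0‖` for all `m ≥ 1`. -/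
theorem first_order_unconditional_stability
    {S : Type*} [Fintype S] [Nonempty S] (w : S → ℝ) (hw : ∀ z, 0 < w z)
    (δt : ℝ) (hδt : 0 < δt)
    (u ut lam f : ℕ → S → ℝ)
    (hstep1 : ∀ n z, (ut (n + 1) z - u n z) / δt + f n z = 0)
    (hstep2 : ∀ n z, (u (n + 1) z - ut (n + 1) z) / δt = lam (n + 1) z)
    (hKKT : ∀ n z, 0 ≤ lam (n + 1) z ∧ 0 ≤ u (n + 1) z ∧
      lam (n + 1) z * u (n + 1) z = 0)
    (hpos : ∀ n, 0 ≤ ∑ z, w z * f n z * ut (n + 1) z) :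
    (∀ n, Real.sqrt (∑ z, w z * u (n + 1) z * u (n + 1) z)
        ≤ Real.sqrt (∑ z, w z * u n z * u n z)) ∧
    (∀ m, 1 ≤ m → Real.sqrt (∑ z, w z * u m z * u m z)
        ≤ Real.sqrt (∑ z, w z * u 0 z * u 0 z)) := by
  have hcompl n : weightedForm w (lam (n + 1)) (u (n + 1)) = 0 := by
    simp [weightedForm_apply, mul_assoc, hKKT]
  have hanti : Antitone fun n => Real.sqrt (weightedForm w (u n) (u n)) :=
    first_order_unconditional_stability_general
      (weightedForm_isPosSemidef fun z => (hw z).le) (fun _ => hδt)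
      (fun n => funext fun z => by simpa [div_eq_inv_mul] using hstep1 n z)
      (fun n => funext fun z => by simpa [div_eq_inv_mul] using hstep2 n z)
      (fun n => (hcompl n).le) hpos
  exact ⟨fun n => hanti n.le_succ, fun m _ => hanti m.zero_le⟩
end

section
/- Let δt > 0 and ξ ∈ ℝ, and let u, ũ, v, λ, f : S → ℝ satisfy for every z ∈ S: (ũ(z) − v(z))/δt + f(z) = 0 and (u(z) − ũ(z))/δt = λ(z) + ξ, with λ(z) ≥ 0 for all z. If [f, 1] = 0 and [u, 1] = [v, 1], then [λ, 1] + ξ·[1, 1] = 0, hence ξ = −[λ, 1]/[1, 1] ≤ 0. -/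
open Finset

section MassBalance

variable {R V M : Type*} [Ring R] [AddCommGroup V] [Module R V] [AddCommGroup M] [Module R M]

theorem map_multiplier_add_smul_eq_zero (m : V →ₗ[R] M) {c ξ : R} {u ut v lam f e : V}
    (hpred : c • (ut - v) + f = 0) (hcorr : c • (u - ut) = lam + ξ • e)
    (hf : m f = 0) (hmass : m u = m v) :
    m lam + ξ • m e = 0 := by
  -- Adding the two steps eliminates the predictor `ut`.
  have hsum : lam + ξ • e = c • (u - v) + f := by
    rw [← hcorr, ← sub_add_sub_cancel u ut v, smul_add, add_assoc, hpred, add_zero]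
  calc m lam + ξ • m e = m (lam + ξ • e) := by rw [map_add, map_smul]
    _ = c • (m u - m v) + m f := by rw [hsum, map_add, map_smul, map_sub]
    _ = 0 := by rw [hmass, hf, sub_self, smul_zero, add_zero]

end MassBalance

section DiscreteInner

variable {S R : Type*} [Fintype S]

section CommSemiring

variable [CommSemiring R]

/-- The discrete inner product `[u, v] = ∑ z, w z * u z * v z` with weights `w`, as a bilinear
form, so that the mass `[·, 1]` is the linear functional `(discreteInner w).flip 1`. -/
def discreteInner (w : S → R) : LinearMap.BilinForm R (S → R) :=
  LinearMap.mk₂ R (fun u v ↦ ∑ z, w z * u z * v z)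
    (fun u u' v ↦ by simp only [Pi.add_apply, mul_add, add_mul, sum_add_distrib])
    (fun a u v ↦ by
      simp only [Pi.smul_apply, smul_eq_mul, mul_sum, mul_assoc, mul_left_comm a])
    (fun u v v' ↦ by simp only [Pi.add_apply, mul_add, sum_add_distrib])
    (fun a u v ↦ by simp only [Pi.smul_apply, smul_eq_mul, mul_sum, mul_left_comm a])

theorem discreteInner_apply (w u v : S → R) :
    discreteInner w u v = ∑ z, w z * u z * v z :=
  rfl

theorem discreteInner_nonneg [PartialOrder R] [IsOrderedRing R] {w u v : S → R}
    (hw : 0 ≤ w) (hu : 0 ≤ u) (hv : 0 ≤ v) : 0 ≤ discreteInner w u v :=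
  sum_nonneg fun z _ ↦ mul_nonneg (mul_nonneg (hw z) (hu z)) (hv z)

end CommSemiring

theorem discreteInner_self_pos [CommRing R] [LinearOrder R] [IsStrictOrderedRing R] {w u : S → R}
    (hw : ∀ z, 0 < w z) (hu : u ≠ 0) : 0 < discreteInner w u u := by
  obtain ⟨z₀, hz₀⟩ := Function.ne_iff.mp hu
  simp only [discreteInner_apply, mul_assoc]
  exact sum_pos' (fun z _ ↦ mul_nonneg (hw z).le (mul_self_nonneg (u z)))
    ⟨z₀, mem_univ z₀, mul_pos (hw z₀) (mul_self_pos.2 hz₀)⟩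

end DiscreteInner

-- Here `c` stands for `1 / δt`, `m` for the mass `[·, 1]` and `e` for the constant function `1`.
theorem scalar_mass_multiplier_nonpositive_general {K V : Type*} [Field K] [LinearOrder K]
    [IsStrictOrderedRing K] [AddCommGroup V] [Module K V] (m : V →ₗ[K] K) {c ξ : K}
    {u ut v lam f e : V}
    (hpred : c • (ut - v) + f = 0) (hcorr : c • (u - ut) = lam + ξ • e)
    (hlam : 0 ≤ m lam) (he : 0 < m e) (hf : m f = 0) (hmass : m u = m v) :
    m lam + ξ * m e = 0 ∧ ξ = -m lam / m e ∧ ξ ≤ 0 := by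
  have hbalance : m lam + ξ * m e = 0 := map_multiplier_add_smul_eq_zero m hpred hcorr hf hmass
  have hξ : ξ = -m lam / m e := eq_div_of_mul_eq he.ne' (eq_neg_of_add_eq_zero_right hbalance)
  exact ⟨hbalance, hξ, hξ.trans_le (div_nonpos_of_nonpos_of_nonneg (neg_nonpos.2 hlam) he.le)⟩

/-- Sign property of the scalar mass multiplier (proof of Theorem 3.2): with
`v` the solution at level `n`, `ut = ũ` the predictor, `u` the corrected
solution, `lam ≥ 0` the pointwise multiplier and `ξ` the scalar multiplier, if
`[f, 1] = 0` and `[u, 1] = [v, 1]` then `[λ, 1] + ξ·[1, 1] = 0`, hence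
`ξ = −[λ, 1]/[1, 1] ≤ 0`. -/
theorem scalar_mass_multiplier_nonpositive
    {S : Type*} [Fintype S] [Nonempty S] (w : S → ℝ) (hw : ∀ z, 0 < w z)
    (δt : ℝ) (hδt : 0 < δt) (ξ : ℝ)
    (u ut v lam f : S → ℝ)
    (hstep1 : ∀ z, (ut z - v z) / δt + f z = 0)
    (hstep2 : ∀ z, (u z - ut z) / δt = lam z + ξ)
    (hlam : ∀ z, 0 ≤ lam z)
    (hf1 : (∑ z, w z * f z * 1) = 0)
    (hmass : (∑ z, w z * u z * 1) = ∑ z, w z * v z * 1) :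
    (∑ z, w z * lam z * 1) + ξ * (∑ z, w z * (1 : ℝ) * 1) = 0 ∧
    ξ = -(∑ z, w z * lam z * 1) / (∑ z, w z * (1 : ℝ) * 1) ∧
    ξ ≤ 0 :=
  scalar_mass_multiplier_nonpositive_general ((discreteInner w).flip 1) (c := δt⁻¹)
    (ut := ut) (e := 1)
    (funext fun z ↦ by simp [← div_eq_inv_mul, hstep1])
    (funext fun z ↦ by simp [← div_eq_inv_mul, hstep2])
    (discreteInner_nonneg (fun z ↦ (hw z).le) hlam zero_le_one)
    (discreteInner_self_pos hw one_ne_zero) hf1 hmass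
end
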